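/- Let m ≥ 3 be odd, let i ≥ 0 be an integer, and suppose the continuous map f : I → I has a period-(2^i·m) point. Then there exists ε > 0 such that every continuous map g : I → I with sup_{x ∈ I} |g(x) − f(x)| < ε has a period-(2^i·(m+2)) point. -/

import Mathlib

/-- `x` is a periodic point of `f` with least period `m`. -/
def PeriodPt (f : ℝ → ℝ) (m : ℕ) (x : ℝ) : Prop :=
  f^[m] x = x ∧ ∀ i : ℕ, 0 < i → i < m → f^[i] x ≠ x

/-!
The minimum `p` of an orbit of odd period `m ≥ 3` has a preimage `v` under `f ∘ f` with
`p < v < f v`, and then `f^[m + 2] v = p` too. The three inequalities `v < f v`, `f (f v) < v` and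
`f^[m + 2] v < v` survive small perturbations of `f`, and they already force the period `m + 2`:
to the left of `v` there is a `u` with `f (f u) = u < f u` such that `f ∘ f` moves `(u, v]` to the
left. Hence every point of `(u, v]` fixed by `f^[k]`, `k` odd, has a point fixed by `f^[k + 2]` to
its left, so the leftmost one fixed by `f^[m + 2]` cannot have a smaller period.

For the period `2 ^ i * m` this is applied to `f^[2 ^ i]`. A point of period `q = m + 2` for
`g^[2 ^ i]` has period `2 ^ j * q` for `g` with some `j ≤ i`. If `j < i`, then `g^[2 ^ (i - 1)]` has
the odd period `q ≥ 3` and it suffices that such a map `h` has every even period. Indeed `h ∘ h`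
maps both ends of some interval `(d, z)` to `z` and its interior below `z`, while `h` maps that
interior above `z`. The same descent, now for `h ∘ h`, gives an orbit of `h ∘ h` of any period
inside `(d, z)`, and under `h` it alternates between the two sides of `z`.
-/

open Filter Function OrderDual Set
open scoped Topology

section MinimalPeriod

variable {α : Type*} {f : α → α} {x : α} {n : ℕ}

theorem mul_minimalPeriod_iterate_of_dvd (hn : n ≠ 0) (h : n ∣ minimalPeriod f x) :
    n * minimalPeriod f^[n] x = minimalPeriod f x := by
  rw [minimalPeriod_iterate_eq_div_gcd hn, Nat.gcd_eq_right h, Nat.mul_div_cancel' h]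

theorem pow_mul_minimalPeriod_iterate_pow_of_dvd {i : ℕ} (hn : n ≠ 0)
    (h : n ∣ minimalPeriod f^[n ^ i] x) :
    n ^ i * minimalPeriod f^[n ^ i] x = minimalPeriod f x := by
  induction i with
  | zero => simp
  | succ i ih =>
    rw [pow_succ, iterate_mul] at h ⊢
    have hdvd : n ∣ minimalPeriod f^[n ^ i] x :=
      h.trans ((isPeriodicPt_minimalPeriod _ x).iterate n).minimalPeriod_dvd
    rw [mul_assoc, mul_minimalPeriod_iterate_of_dvd hn hdvd, ih hdvd]

theorem exists_minimalPeriod_eq_forall_le_iterate [LinearOrder α] (hx : x ∈ periodicPts f) :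
    ∃ p, minimalPeriod f p = minimalPeriod f x ∧ ∀ k, p ≤ f^[k] p := by
  have hpos := minimalPeriod_pos_of_mem_periodicPts hx
  obtain ⟨k, -, hk⟩ := Finset.exists_min_image (Finset.range (minimalPeriod f x)) (f^[·] x)
    ⟨0, Finset.mem_range.2 hpos⟩
  refine ⟨f^[k] x, minimalPeriod_apply_iterate hx k, fun j => ?_⟩
  rw [← iterate_add_apply, ← iterate_mod_minimalPeriod_eq (n := j + k)]
  exact hk _ (Finset.mem_range.2 (Nat.mod_lt _ hpos))

end MinimalPeriod

section PeriodDescent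

variable {α : Type*} [LinearOrder α] {f : α → α} {u v : α} {s n : ℕ}

/-- Periods descend towards `u` in steps of `s`: to the left of every point of `(u, v]` fixed by
`f^[k]` there is a point of `(u, v]` fixed by `f^[k + s]`. Only exponents `k > 0` in the residue
class of the target exponent `n` are considered, because the maps of interest push `u` to the right
only along such a class. -/
def PeriodDescent (f : α → α) (u v : α) (s n : ℕ) : Prop :=
  ∀ ⦃k⦄, 0 < k → k ≡ n [MOD s] → ∀ ⦃c⦄, c ∈ Ioc u v → IsPeriodicPt f k c →
    ∃ c' ∈ Ioo u c, IsPeriodicPt f (k + s) c'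

namespace PeriodDescent

theorem exists_isPeriodicPt_lt (h : PeriodDescent f u v s n) {k : ℕ} (hk : 0 < k) (hkn : k < n)
    (hmod : k ≡ n [MOD s]) {c : α} (hc : c ∈ Ioc u v) (hper : IsPeriodicPt f k c) :
    ∃ c' ∈ Ioo u c, IsPeriodicPt f n c' := by
  obtain ⟨j, hj⟩ := (Nat.modEq_iff_dvd' hkn.le).1 hmod
  induction j generalizing k c with
  | zero => omega
  | succ j ih =>
    rw [Nat.mul_succ] at hj
    obtain ⟨c₁, hc₁, hper₁⟩ := h hk hmod hc hper
    obtain heq | hlt := (show k + s ≤ n by omega).eq_or_lt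
    · exact ⟨c₁, hc₁, heq ▸ hper₁⟩
    · obtain ⟨c₂, hc₂, hper₂⟩ := ih (by omega) hlt ((Nat.add_mod_right k s).trans hmod)
        ⟨hc₁.1, hc₁.2.le.trans hc.2⟩ hper₁ (by omega)
      exact ⟨c₂, ⟨hc₂.1, hc₂.2.trans hc₁.2⟩, hper₂⟩

theorem minimalPeriod_eq (h : PeriodDescent f u v s n) (hn : 0 < n) {y : α}
    (hy : IsLeast (Ioi u ∩ ptsOfPeriod f n) y) (hyv : y ≤ v)
    (hmod : minimalPeriod f y ≡ n [MOD s]) : minimalPeriod f y = n := by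
  have hper : IsPeriodicPt f n y := hy.1.2
  by_contra hne
  obtain ⟨c, hc, hcn⟩ := h.exists_isPeriodicPt_lt (hper.minimalPeriod_pos hn)
    ((hper.minimalPeriod_le hn).lt_of_ne hne) hmod ⟨hy.1.1, hyv⟩ (isPeriodicPt_minimalPeriod f y)
  exact (hy.2 ⟨hc.1, hcn⟩).not_gt hc.2

end PeriodDescent

end PeriodDescent

section IntermediateValue

variable {α β : Type*} [ConditionallyCompleteLinearOrder α] [DenselyOrdered α]
  [TopologicalSpace α] [OrderTopology α] [LinearOrder β] [TopologicalSpace β]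
  [OrderClosedTopology β] {φ ψ : α → β} {h : α → α} {a b : α}

theorem exists_first_eq (hφ : Continuous φ) (hψ : Continuous ψ) (hab : a ≤ b) (ha : φ a < ψ a)
    (hb : ψ b ≤ φ b) : ∃ c ∈ Ioc a b, φ c = ψ c ∧ ∀ t ∈ Ico a c, φ t < ψ t := by
  obtain ⟨c, ⟨hc, hψφ⟩, hleast⟩ :=
    (isCompact_Icc.inter_right (isClosed_le hψ hφ)).exists_isLeast ⟨b, right_mem_Icc.2 hab, hb⟩
  have hlt : ∀ t ∈ Ico a c, φ t < ψ t := fun t ht => by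
    by_contra! hle
    exact (hleast ⟨⟨ht.1, ht.2.le.trans hc.2⟩, hle⟩).not_gt ht.2
  obtain ⟨t, ht, heq⟩ := isPreconnected_Icc.intermediate_value₂ (left_mem_Icc.2 hc.1)
    (right_mem_Icc.2 hc.1) hφ.continuousOn hψ.continuousOn ha.le hψφ
  obtain rfl : t = c := ht.2.eq_of_not_lt fun htc => (hlt t ⟨ht.1, htc⟩).ne heq
  have hne : a ≠ t := fun hat => ha.ne (hat ▸ heq)
  exact ⟨t, ⟨hc.1.lt_of_ne hne, hc.2⟩, heq, hlt⟩

theorem exists_last_eq (hφ : Continuous φ) (hψ : Continuous ψ) (hab : a ≤ b) (ha : ψ a ≤ φ a)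
    (hb : φ b < ψ b) : ∃ c ∈ Ico a b, φ c = ψ c ∧ ∀ t ∈ Ioc c b, φ t < ψ t := by
  obtain ⟨c, hc, heq, hlt⟩ := exists_first_eq (α := αᵒᵈ) (φ := φ ∘ ofDual)
    (ψ := ψ ∘ ofDual) (a := toDual b) (b := toDual a) hφ hψ hab hb ha
  exact ⟨c, ⟨hc.2, hc.1⟩, heq, fun t ht => hlt t ⟨ht.2, ht.1⟩⟩

theorem exists_isLeast_fixedPoints (hh : Continuous h) (hab : a ≤ b) (ha : a < h a)
    (hb : h b ≤ b) : ∃ c ≤ b, IsLeast (Ioi a ∩ fixedPoints h) c := by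
  obtain ⟨c, hc, heq, hlt⟩ := exists_first_eq continuous_id hh hab ha hb
  refine ⟨c, hc.2, ⟨hc.1, heq.symm⟩, fun t ⟨hat, hfix⟩ => ?_⟩
  by_contra! htc
  exact (hlt t ⟨le_of_lt hat, htc⟩).ne' hfix

theorem exists_isFixedPt_mem_Ioo (hh : Continuous h) (hab : a ≤ b) (ha : a < h a)
    (hb : h b < b) : ∃ c ∈ Ioo a b, IsFixedPt h c := by
  obtain ⟨c, hcb, ⟨hac, hfix⟩, -⟩ := exists_isLeast_fixedPoints hh hab ha hb.le
  exact ⟨c, ⟨hac, hcb.lt_of_ne fun heq => hb.ne (heq ▸ hfix)⟩, hfix⟩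

end IntermediateValue

section OddPeriod

theorem lt_iterate_of_odd {α : Type*} [LinearOrder α] {f : α → α} {v : α}
    (h : ∀ t ≤ v, t < f t ∧ f (f t) < t) {n : ℕ} (hn : Odd n) : v < f^[n] v := by
  have hright : ∀ t ≤ v, v < f t := fun t ht => by
    by_contra! hle
    exact ((h t ht).1.trans (h _ hle).1).not_gt (h t ht).2
  have hleft : ∀ k, (f^[2])^[k] v ≤ v := fun k => by
    induction k with
    | zero => exact le_rfl
    | succ k ih =>
      rw [iterate_succ_apply']
      exact (h _ ih).2.le.trans ih
  obtain ⟨k, rfl⟩ := hn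
  rw [← Nat.succ_eq_add_one, iterate_succ_apply', iterate_mul]
  exact hright _ (hleft k)

variable {α : Type*} [ConditionallyCompleteLinearOrder α] [DenselyOrdered α] [TopologicalSpace α]
  [OrderTopology α] {f : α → α} {v : α} {n : ℕ}

theorem exists_lt_forall_lt_apply_le_apply_apply (hf : Continuous f) (hv : v < f v)
    (hv₂ : f (f v) < v) (hn : Odd n) (hvn : f^[n] v ≤ v) :
    ∃ t < v, (∀ x ∈ Icc t v, x < f x) ∧ t ≤ f (f t) := by
  by_cases hex : ∃ x ≤ v, f x ≤ x
  · obtain ⟨x, hxv, hx⟩ := hex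
    obtain ⟨w, ⟨-, hwv⟩, hw, hlt⟩ := exists_last_eq continuous_id hf hxv hx hv
    have := nhdsGT_neBot_of_exists_gt ⟨v, hwv⟩
    have hnear : ∀ᶠ t in 𝓝[>] w, f t < v :=
      (hf.continuousAt.eventually_lt_const (hw ▸ hwv)).filter_mono nhdsWithin_le_nhds
    obtain ⟨t, hft, hwt, htv⟩ := (hnear.and (Ioo_mem_nhdsGT hwv)).exists
    have htft : t < f t := hlt t ⟨hwt, htv.le⟩
    exact ⟨t, htv, fun x hx => hlt x ⟨hwt.trans_le hx.1, hx.2⟩,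
      (htft.trans (hlt _ ⟨hwt.trans htft, hft.le⟩)).le⟩
  · push Not at hex
    by_contra! hlow
    refine (lt_iterate_of_odd (fun t ht => ⟨hex t ht, ?_⟩) hn).not_ge hvn
    obtain rfl | htv := ht.eq_or_lt
    · exact hv₂
    · exact hlow t htv fun x hx => hex x hx.2

theorem exists_isPeriodicPt_two_lt (hf : Continuous f) (hv : v < f v) (hv₂ : f (f v) < v)
    (hn : Odd n) (hvn : f^[n] v ≤ v) :
    ∃ u < v, IsPeriodicPt f 2 u ∧ u < f u ∧ ∀ t ∈ Ioc u v, f (f t) < t := by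
  obtain ⟨t, htv, hlt, ht₂⟩ := exists_lt_forall_lt_apply_le_apply_apply hf hv hv₂ hn hvn
  obtain ⟨u, hu, hu₂, hgt⟩ := exists_last_eq (hf.comp hf) continuous_id htv.le ht₂ hv₂
  exact ⟨u, hu.2, hu₂, hlt u ⟨hu.1, hu.2.le⟩, hgt⟩

theorem exists_minimalPeriod_eq_of_odd (hf : Continuous f) (hv : v < f v) (hv₂ : f (f v) < v)
    (hn : Odd n) (hvn : f^[n] v ≤ v) : ∃ y, minimalPeriod f y = n := by
  obtain ⟨u, huv, hu₂, hu, hneg⟩ := exists_isPeriodicPt_two_lt hf hv hv₂ hn hvn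
  have hlt_iterate : ∀ k, Odd k → u < f^[k] u := by
    rintro k ⟨j, rfl⟩
    rwa [add_comm, iterate_add_apply, (hu₂.mul_const j).eq]
  have hdescent : PeriodDescent f u v 2 n := fun k _ hmod c hc hper => by
    have hk : Odd (k + 2) := by grind [Nat.ModEq]
    have hc₂ : f^[k + 2] c = f (f c) := by
      rw [add_comm, iterate_add_apply, hper.eq, iterate_succ_apply, iterate_one]
    exact exists_isFixedPt_mem_Ioo (hf.iterate _) hc.1.le (hlt_iterate _ hk)
      (hc₂.trans_lt (hneg c hc))
  obtain ⟨y, hyv, hy⟩ :=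
    exists_isLeast_fixedPoints (hf.iterate n) huv.le (hlt_iterate n hn) hvn
  have hyodd : Odd (minimalPeriod f y) := hn.of_dvd_nat (IsPeriodicPt.minimalPeriod_dvd hy.1.2)
  exact ⟨y, hdescent.minimalPeriod_eq hn.pos hy hyv
    ((Nat.odd_iff.1 hyodd).trans (Nat.odd_iff.1 hn).symm)⟩

theorem exists_lt_apply_eq_iterate_minimalPeriod_pred {p : α} (hf : Continuous f)
    (hp : 3 ≤ minimalPeriod f p) (hmin : ∀ k, p ≤ f^[k] p) :
    ∃ v, p < v ∧ v < f v ∧ f v = f^[minimalPeriod f p - 1] p ∧ f (f v) = p := by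
  set m := minimalPeriod f p
  have hne : ∀ k, 0 < k → k < m → f^[k] p ≠ p := fun k hk hkm =>
    not_isPeriodicPt_of_pos_of_lt_minimalPeriod hk.ne' hkm
  set b := f^[m - 1] p with hb
  have hfb : f b = p := by
    rw [hb, ← iterate_succ_apply' f, Nat.succ_eq_add_one, Nat.sub_add_cancel (by omega)]
    exact iterate_minimalPeriod
  have hpb : p < b := (hmin _).lt_of_ne' (hne _ (by omega) (by omega))
  obtain ⟨j, hjb, hbj⟩ : ∃ j, f^[j] p < b ∧ b ≤ f (f^[j] p) := by
    by_contra! hlt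
    have hbelow : ∀ j, f^[j] p < b := fun j => by
      induction j with
      | zero => exact hpb
      | succ j ih =>
        rw [iterate_succ_apply']
        exact hlt j ih
    exact (hbelow (m - 1)).false
  obtain ⟨v, hv, hfv⟩ := intermediate_value_Icc' hjb.le hf.continuousOn ⟨hfb ▸ hpb.le, hbj⟩
  have hvb : v ≠ b := by
    rintro rfl
    exact hpb.ne (hfb.symm.trans hfv)
  have hpv : p ≠ v := by
    rintro rfl
    exact hne 2 (by omega) (by omega) (by rw [iterate_succ_apply, iterate_one, hfv, hfb])
  exact ⟨v, ((hmin j).trans hv.1).lt_of_ne hpv, hfv ▸ hv.2.lt_of_ne hvb, hfv, by rw [hfv, hfb]⟩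

end OddPeriod

section EvenPeriod

theorem iterate_eq_of_isFixedPt_apply {α : Type*} {h : α → α} {d z : α} (hd : h d = z)
    (hz : IsFixedPt h z) {k : ℕ} (hk : 0 < k) : h^[k] d = z := by
  rw [← Nat.sub_add_cancel hk, iterate_succ_apply, hd, hz.iterate]

theorem exists_mem_Ico_le_apply {α : Type*} [LinearOrder α] {h : α → α} {p v z : α} {r : ℕ}
    (hpz : p < z) (hmin : ∀ k, p ≤ h^[k] p) (hlt : ∀ t ∈ Ico v z, h t < z) (hr : z ≤ h^[r] p) :
    ∃ t ∈ Ico p v, z ≤ h t := by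
  by_contra! hleft
  have hbelow : ∀ k, h^[k] p < z := fun k => by
    induction k with
    | zero => exact hpz
    | succ k ih =>
      rw [iterate_succ_apply']
      obtain hkv | hvk := lt_or_ge (h^[k] p) v
      · exact hleft _ ⟨hmin k, hkv⟩
      · exact hlt _ ⟨hvk, ih⟩
  exact (hbelow r).not_ge hr

variable {α : Type*} [ConditionallyCompleteLinearOrder α] [DenselyOrdered α] [TopologicalSpace α]
  [OrderTopology α] {f h : α → α} {d p v x z : α} {n r : ℕ}

theorem exists_fixedPoint_apply_apply_right (hf : Continuous f) (hv : v < f v)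
    (hv₂ : f (f v) < v) :
    ∃ z e, v < z ∧ z ≤ e ∧ e < f v ∧ f e = e ∧ f (f z) = z ∧ ∀ t ∈ Ico v z, f (f t) < t := by
  obtain ⟨e, he, hfe⟩ := exists_isFixedPt_mem_Ioo hf hv.le hv (hv₂.trans hv)
  obtain ⟨z, hz, hz₂, hlt⟩ := exists_first_eq (hf.comp hf) continuous_id he.1.le hv₂
    (by simp [hfe.eq])
  exact ⟨z, e, hz.1, hz.2, he.2, hfe, hz₂, hlt⟩

theorem exists_fold_apply_apply (hf : Continuous f) (hpv : p < v) (hv : v < f v)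
    (hv₂ : f (f v) = p) (hmin : ∀ k, p ≤ f^[k] p) (hr : f^[2 * r] p = f v) :
    ∃ d z, p ≤ d ∧ d < v ∧ v < z ∧ f (f d) = z ∧ f (f z) = z ∧
      ∀ t ∈ Ioo d z, f (f t) < z ∧ z < f t := by
  obtain ⟨z, e, hvz, hze, hev, hfe, hz₂, hright⟩ :=
    exists_fixedPoint_apply_apply_right hf hv (hv₂.trans_lt hpv)
  have hright' : ∀ t ∈ Ico v z, f (f t) < z := fun t ht => (hright t ht).trans ht.2
  obtain ⟨d₀, hd₀, hzd₀⟩ := exists_mem_Ico_le_apply (h := f^[2]) (r := r) (hpv.trans hvz)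
    (fun k => iterate_mul f 2 k ▸ hmin (2 * k)) hright'
    (by rw [← iterate_mul, hr]; exact hze.trans hev.le)
  obtain ⟨d, hd, hd₂, hleft⟩ := exists_last_eq (hf.comp hf) continuous_const hd₀.2.le hzd₀
    (hright' v ⟨le_rfl, hvz⟩)
  have hbelow : ∀ t ∈ Ioo d z, f (f t) < z := fun t ht => by
    obtain htv | hvt := le_or_gt t v
    · exact hleft t ⟨ht.1, htv⟩
    · exact hright' t ⟨hvt.le, ht.2⟩
  refine ⟨d, z, hd₀.1.trans hd.1, hd.2, hvz, hd₂, hz₂, fun t ht => ⟨hbelow t ht, ?_⟩⟩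
  -- Otherwise `f` takes its fixed value `e ≥ z` between `t` and `v`, and so does `f ∘ f`.
  by_contra! hle
  obtain ⟨s, hs, hse⟩ := intermediate_value_uIcc hf.continuousOn
    (mem_uIcc_of_le (hle.trans hze) hev.le)
  have hsdz : s ∈ Ioo d z := ordConnected_Ioo.uIcc_subset ht ⟨hd.2, hvz⟩ hs
  exact (hbelow s hsdz).not_ge (by rwa [hse, hfe])

theorem periodDescent_of_fold (hh : Continuous h) (hvz : v < z) (hd : h d = z) (hz : IsFixedPt h z)
    (hv : h v ≤ d) : PeriodDescent h d v 1 n := fun k hk _ c hc hper => by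
  have hdz : d < z := hc.1.trans_le (hc.2.trans hvz.le)
  have hkd : h^[k] d = z := iterate_eq_of_isFixedPt_apply hd hz hk
  obtain ⟨w, hw, hwv⟩ := intermediate_value_Icc' hc.1.le (hh.iterate k).continuousOn
    ⟨hper.eq.trans_le hc.2, hkd ▸ hvz.le⟩
  have hdw : d < w := hw.1.lt_of_ne fun heq => hvz.ne (hwv.symm.trans (heq ▸ hkd))
  have hkw : h^[k + 1] w ≤ d := by rwa [iterate_succ_apply', hwv]
  obtain ⟨c', hc', hper'⟩ := exists_isFixedPt_mem_Ioo (hh.iterate (k + 1)) hdw.le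
    (hdz.trans_eq (iterate_eq_of_isFixedPt_apply hd hz k.succ_pos).symm) (hkw.trans_lt hdw)
  exact ⟨c', ⟨hc'.1, hc'.2.trans_le hw.2⟩, hper'⟩

theorem exists_minimalPeriod_eq_of_fold (hh : Continuous h) (hdv : d < v) (hvz : v < z)
    (hd : h d = z) (hz : IsFixedPt h z) (hv : h v ≤ d) (hlt : ∀ t ∈ Ioo d z, h t < z) (hn : 0 < n) :
    ∃ y, minimalPeriod h y = n ∧ ∀ k, h^[k] y ∈ Ioo d z := by
  have hdescent : PeriodDescent h d v 1 n := periodDescent_of_fold hh hvz hd hz hv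
  have hd_lt : ∀ k, 0 < k → d < h^[k] d := fun k hk =>
    (hdv.trans hvz).trans_eq (iterate_eq_of_isFixedPt_apply hd hz hk).symm
  obtain ⟨c, hc, hcn⟩ : ∃ c ∈ Ioo d v, IsPeriodicPt h n c := by
    obtain ⟨c, hc, hfix⟩ := exists_isFixedPt_mem_Ioo hh hdv.le (hd_lt 1 one_pos) (hv.trans_lt hdv)
    exact ⟨c, hc, IsFixedPt.isPeriodicPt hfix n⟩
  obtain ⟨y, hyc, hy⟩ :=
    exists_isLeast_fixedPoints (hh.iterate n) hc.1.le (hd_lt n hn) hcn.eq.le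
  have hyv : y < v := hyc.trans_lt hc.2
  have hper : minimalPeriod h y = n := hdescent.minimalPeriod_eq hn hy hyv.le Nat.modEq_one
  have habove : ∀ k, 0 < k → k < n → d < h^[k] y := fun k hk hkn => by
    by_contra! hle
    obtain ⟨c₁, hc₁, hfix⟩ := exists_isFixedPt_mem_Ioo (hh.iterate k) (le_of_lt hy.1.1) (hd_lt k hk)
      (hle.trans_lt hy.1.1)
    obtain ⟨c₂, hc₂, hper₂⟩ := hdescent.exists_isPeriodicPt_lt hk hkn Nat.modEq_one
      ⟨hc₁.1, (hc₁.2.trans hyv).le⟩ hfix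
    exact (hy.2 ⟨hc₂.1, hper₂⟩).not_gt (hc₂.2.trans hc₁.2)
  have habove' : ∀ k, d < h^[k] y := fun k => by
    rw [← iterate_mod_minimalPeriod_eq, hper]
    obtain hk | hk := (k % n).eq_zero_or_pos
    · rw [hk]
      exact hy.1.1
    · exact habove _ hk (Nat.mod_lt _ hn)
  refine ⟨y, hper, fun k => ⟨habove' k, ?_⟩⟩
  induction k with
  | zero => exact hyv.trans hvz
  | succ k ih => exact iterate_succ_apply' h k y ▸ hlt _ ⟨habove' k, ih⟩

theorem exists_minimalPeriod_eq_two_mul (hf : Continuous f) (hx : 3 ≤ minimalPeriod f x)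
    (hodd : Odd (minimalPeriod f x)) (hn : 0 < n) : ∃ y, minimalPeriod f y = 2 * n := by
  obtain ⟨p, hpx, hmin⟩ := exists_minimalPeriod_eq_forall_le_iterate
    (minimalPeriod_pos_iff_mem_periodicPts.1 hodd.pos)
  rw [← hpx] at hx hodd
  obtain ⟨v, hpv, hv, hfv, hv₂⟩ := exists_lt_apply_eq_iterate_minimalPeriod_pred hf hx hmin
  obtain ⟨r, hr⟩ := hodd
  obtain ⟨d, z, hpd, hdv, hvz, hd, hz, hfold⟩ := exists_fold_apply_apply (r := r) hf hpv hv hv₂ hmin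
    (by rw [hfv, hr, Nat.add_sub_cancel])
  obtain ⟨y, hy, hmem⟩ := exists_minimalPeriod_eq_of_fold (h := f^[2]) (hf.iterate 2) hdv hvz hd hz
    (hv₂.trans_le hpd) (fun t ht => (hfold t ht).1) hn
  refine ⟨y, ?_⟩
  -- An odd period would make `y` the image of a point of its orbit under `f^[2]`, so that `z < y`.
  have heven : Even (minimalPeriod f y) := by
    by_contra hnot
    obtain ⟨k, hk⟩ := Nat.not_even_iff_odd.1 hnot
    have himage : f ((f^[2])^[k] y) = y := by
      rw [← iterate_mul, ← iterate_succ_apply' f, Nat.succ_eq_add_one, ← hk, iterate_minimalPeriod]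
    exact ((hfold _ (hmem k)).2.trans_eq himage).not_gt (hmem 0).2
  rw [← mul_minimalPeriod_iterate_of_dvd two_ne_zero heven.two_dvd, hy]

theorem exists_minimalPeriod_eq_two_pow_mul {i : ℕ} (hf : Continuous f)
    (hx : 3 ≤ minimalPeriod f^[2 ^ i] x) (hodd : Odd (minimalPeriod f^[2 ^ i] x)) :
    ∃ y, minimalPeriod f y = 2 ^ i * minimalPeriod f^[2 ^ i] x := by
  cases i with
  | zero => exact ⟨x, by simp⟩
  | succ l =>
    rw [pow_succ, iterate_mul] at hx hodd ⊢
    set g := f^[2 ^ l]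
    obtain ⟨y, hy⟩ : ∃ y, minimalPeriod g y = 2 * minimalPeriod g^[2] x := by
      obtain heven | hodd' := Nat.even_or_odd (minimalPeriod g x)
      · exact ⟨x, (mul_minimalPeriod_iterate_of_dvd two_ne_zero heven.two_dvd).symm⟩
      · have heq : minimalPeriod g^[2] x = minimalPeriod g x := by
          rw [minimalPeriod_iterate_eq_div_gcd two_ne_zero,
            (Nat.coprime_two_right.2 hodd').gcd_eq_one, Nat.div_one]
        exact exists_minimalPeriod_eq_two_mul (hf.iterate _) (heq ▸ hx) hodd' hodd.pos
    refine ⟨y, ?_⟩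
    rw [← pow_mul_minimalPeriod_iterate_pow_of_dvd two_ne_zero (Dvd.intro _ hy.symm), hy, mul_assoc]

end EvenPeriod

section Stability

theorem tendsto_iterate_apply_of_tendstoLocallyUniformly {α ι : Type*} [UniformSpace α]
    {l : Filter ι} {F : ι → α → α} {f : α → α} (hF : TendstoLocallyUniformly F f l)
    (hf : Continuous f) (v : α) (k : ℕ) :
    Tendsto (fun j => (F j)^[k] v) l (𝓝 (f^[k] v)) := by
  induction k with
  | zero => exact tendsto_const_nhds
  | succ k ih =>
    simp only [iterate_succ_apply']
    exact hF.tendsto_comp hf.continuousAt ih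

variable {α ι : Type*} [ConditionallyCompleteLinearOrder α] [DenselyOrdered α] [UniformSpace α]
  [OrderTopology α] {l : Filter ι} {F : ι → α → α} {f : α → α} {x : α} {i m : ℕ}

theorem eventually_exists_minimalPeriod_eq_two_pow_mul_add_two
    (hF : TendstoLocallyUniformly F f l) (hf : Continuous f) (hm : 3 ≤ m) (hodd : Odd m)
    (hx : minimalPeriod f x = 2 ^ i * m) :
    ∀ᶠ j in l, Continuous (F j) → ∃ y, minimalPeriod (F j) y = 2 ^ i * (m + 2) := by
  have hxm : minimalPeriod f^[2 ^ i] x = m := Nat.eq_of_mul_eq_mul_left (Nat.two_pow_pos i)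
    ((mul_minimalPeriod_iterate_of_dvd (Nat.two_pow_pos i).ne' (Dvd.intro _ hx.symm)).trans hx)
  obtain ⟨p, hp, hmin⟩ := exists_minimalPeriod_eq_forall_le_iterate
    (minimalPeriod_pos_iff_mem_periodicPts.1 (hxm ▸ hodd.pos))
  rw [hxm] at hp
  obtain ⟨v, hpv, hv, -, hv₂⟩ :=
    exists_lt_apply_eq_iterate_minimalPeriod_pred (hf.iterate _) (hm.trans_eq hp.symm) hmin
  have hvm : (f^[2 ^ i])^[m + 2] v = p := by
    rw [iterate_add_apply, iterate_succ_apply, iterate_one, hv₂, ← hp, iterate_minimalPeriod]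
  have hlim : ∀ k, Tendsto (fun j => ((F j)^[2 ^ i])^[k] v) l (𝓝 ((f^[2 ^ i])^[k] v)) := fun k => by
    simpa only [iterate_mul] using
      tendsto_iterate_apply_of_tendstoLocallyUniformly hF hf v (2 ^ i * k)
  filter_upwards [(hlim 1).eventually_const_lt hv, (hlim 2).eventually_lt_const (hv₂.trans_lt hpv),
    (hlim (m + 2)).eventually_lt_const (hvm.trans_lt hpv)] with j hj hj₂ hjm hcont
  have hodd₂ : Odd (m + 2) := hodd.add_even even_two
  obtain ⟨w, hw⟩ := exists_minimalPeriod_eq_of_odd (hcont.iterate _) hj hj₂ hodd₂ hjm.le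
  exact hw ▸ exists_minimalPeriod_eq_two_pow_mul hcont (by omega) (hw ▸ hodd₂)

end Stability

section PeriodPt

theorem periodPt_iff_minimalPeriod_eq {f : ℝ → ℝ} {m : ℕ} {x : ℝ} (hm : 0 < m) :
    PeriodPt f m x ↔ minimalPeriod f x = m := by
  refine ⟨fun ⟨hper, hne⟩ => ?_, ?_⟩
  · have hpos := IsPeriodicPt.minimalPeriod_pos hm hper
    refine (IsPeriodicPt.minimalPeriod_le hm hper).eq_of_not_lt fun hlt => ?_
    exact hne _ hpos hlt iterate_minimalPeriod
  · rintro rfl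
    exact ⟨iterate_minimalPeriod, fun i hi hlt =>
      not_isPeriodicPt_of_pos_of_lt_minimalPeriod hi.ne' hlt⟩

theorem minimalPeriod_mapsTo_restrict {α : Type*} {f : α → α} {s : Set α} (hf : MapsTo f s s)
    (x : s) : minimalPeriod (hf.restrict f s s) x = minimalPeriod f x :=
  minimalPeriod_eq_minimalPeriod_iff.2 fun n => by
    simp only [IsPeriodicPt, IsFixedPt, Subtype.ext_iff, hf.coe_iterate_restrict]

theorem stability_of_odd_type_periods_general {s : Set ℝ} (hs : s.OrdConnected) {f : ℝ → ℝ}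
    (hcont : ContinuousOn f s) (hmaps : MapsTo f s s) {m : ℕ} (hm : 3 ≤ m) (hodd : Odd m) (i : ℕ)
    {x : ℝ} (hx : x ∈ s) (hper : PeriodPt f (2 ^ i * m) x) :
    ∃ ε > (0 : ℝ), ∀ g : ℝ → ℝ, ContinuousOn g s → MapsTo g s s →
      (∀ t ∈ s, |g t - f t| < ε) → ∃ y ∈ s, PeriodPt g (2 ^ i * (m + 2)) y := by
  have : Inhabited s := ⟨⟨x, hx⟩⟩
  have hpos : ∀ k, 0 < k → 0 < 2 ^ i * k := fun k hk => Nat.mul_pos (Nat.two_pow_pos i) hk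
  rw [periodPt_iff_minimalPeriod_eq (hpos m hodd.pos),
    ← minimalPeriod_mapsTo_restrict hmaps ⟨x, hx⟩] at hper
  have htendsto : TendstoLocallyUniformly UniformFun.toFun (hmaps.restrict f s s)
      (𝓝 (UniformFun.ofFun (hmaps.restrict f s s))) :=
    (UniformFun.tendsto_iff_tendstoUniformly.1 tendsto_id).tendstoLocallyUniformly
  obtain ⟨ε, hε, hball⟩ := (UniformFun.hasBasis_nhds_of_basis _ _ _
    Metric.uniformity_basis_dist).eventually_iff.1
      (eventually_exists_minimalPeriod_eq_two_pow_mul_add_two htendsto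
        (hcont.mapsToRestrict hmaps) hm hodd hper)
  refine ⟨ε, hε, fun g hg hgmaps hclose => ?_⟩
  obtain ⟨y, hy⟩ := hball (x := UniformFun.ofFun (hgmaps.restrict g s s))
    (fun t => (abs_sub_comm _ _).trans_lt (hclose t t.2)) (hg.mapsToRestrict hgmaps)
  rw [UniformFun.toFun_ofFun, minimalPeriod_mapsTo_restrict] at hy
  exact ⟨y, y.2, (periodPt_iff_minimalPeriod_eq (hpos _ (by omega))).2 hy⟩

end PeriodPt

theorem stability_of_odd_type_periods (a b : ℝ) (hab : a ≤ b) (f : ℝ → ℝ)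
    (hcont : ContinuousOn f (Set.Icc a b))
    (hmaps : Set.MapsTo f (Set.Icc a b) (Set.Icc a b))
    (m : ℕ) (hm : 3 ≤ m) (hodd : Odd m) (i : ℕ)
    (x : ℝ) (hx : x ∈ Set.Icc a b) (hper : PeriodPt f (2 ^ i * m) x) :
    ∃ ε > (0:ℝ), ∀ g : ℝ → ℝ, ContinuousOn g (Set.Icc a b) →
      Set.MapsTo g (Set.Icc a b) (Set.Icc a b) →
      (∀ t ∈ Set.Icc a b, |g t - f t| < ε) →
      ∃ y ∈ Set.Icc a b, PeriodPt g (2 ^ i * (m + 2)) y :=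
  stability_of_odd_type_periods_general ordConnected_Icc hcont hmaps hm hodd i hx hper
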